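/- Let M = (d, Q, δ) be a reset counter machine with states p_init, p_final ∈ Q, and let G(M) be the associated first-order grammar. For every state q ∈ Q and all tuples n̄, n̄' ∈ ℕ^d with n_i ≥ n'_i for all i: if (q, (n₁−n'₁, …, n_d−n'_d)) →* (p_final, m̄) in M for some m̄ ∈ ℕ^d, then A_q(I^{n₁}⊥, I^{n'₁}⊥, …, I^{n_d}⊥, I^{n'_d}⊥) and B_q(I^{n₁}⊥, I^{n'₁}⊥, …, I^{n_d}⊥, I^{n'_d}⊥) are NOT bisimilar in L_{G(M)}. -/

import Mathlib

/-!
Let `S` be a bisimulation, and suppose `S` relates `A_q(v)` and `B_q(v)`, where `v` encodes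
`(n, n')` with `n' ≤ n`. By induction along a run of `M` from `(q, n - n')` to the final state, this
is impossible: the attacker can always move so that every answer leads to a shorter run or an
immediate mismatch.

* At `pfin`, the term `A_pfin(v)` has an `a`-transition and `B_pfin(v)` has none.
* For an increment or a reset the attacker plays that instruction from the `A`-side. The answer is
  forced, and the new pair encodes the difference `n - n'` after the instruction.
* For a decrement of counter `i` (so `n' i < n i`) the attacker moves to `A_(q,i)`. Against
  `B_(q,i,1)` the action `a` leads to the pair `A_q`, `B_q` with `n' i` increased, which lowers the
  difference and keeps `n' ≤ n`. Against `B_(q,i,2)` the action `b` exposes `I^{n i} ⊥` and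
  `I^{n' i} ⊥`, which are not bisimilar because the exponents differ (`ipow_inj_of_bisim`).

Argument lists are handled through `vterms_set_even` and `vterms_set_odd`: overwriting one entry of
the tuple encoding `(n, n')` encodes an updated pair of vectors.
-/

/-- First-order terms over a set `N` of function symbols (nonterminals);
variables `x_{i+1}` are represented as `var i`. -/
inductive FOTerm (N : Type) : Type
  | var : ℕ → FOTerm N
  | app : N → List (FOTerm N) → FOTerm N

/-- Substitution of terms for variables. -/
def FOTerm.subst {N : Type} (σ : ℕ → FOTerm N) : FOTerm N → FOTerm N
  | .var i => σ i
  | .app A ts => .app A (ts.attach.map fun ⟨t, _⟩ => t.subst σ)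

/-- A first-order grammar: ranked nonterminals, actions, and root-rewriting rules;
`Rule A a V` means the rule `A(x₁,…,x_{arity A}) →a V` is in the grammar. -/
structure Grammar where
  N : Type
  arity : N → ℕ
  Act : Type
  Rule : N → Act → FOTerm N → Prop

/-- The labelled transition system `L_G` induced by a grammar: each rule
`A(x₁,…,x_m) →a V` induces transitions `(A(x₁,…,x_m))σ →a Vσ` for all substitutions σ. -/
inductive Grammar.Step (G : Grammar) : FOTerm G.N → G.Act → FOTerm G.N → Prop
  | step (A : G.N) (a : G.Act) (V : FOTerm G.N) (σ : ℕ → FOTerm G.N) :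
      G.Rule A a V →
      G.Step (.app A ((List.range (G.arity A)).map σ)) a (V.subst σ)

/-- A (symmetric) bisimulation for the LTS `L_G`. -/
def Grammar.IsBisimulation (G : Grammar) (B : FOTerm G.N → FOTerm G.N → Prop) : Prop :=
  (∀ T U, B T U → B U T) ∧
  ∀ T U, B T U → ∀ a T', G.Step T a T' → ∃ U', G.Step U a U' ∧ B T' U'

/-- Bisimilarity: `T ∼ U` iff some bisimulation contains `(T, U)`. -/
def Grammar.Bisim (G : Grammar) (T U : FOTerm G.N) : Prop :=
  ∃ B, G.IsBisimulation B ∧ B T U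

/-- Operations of a reset counter machine with `d` counters. -/
inductive RCMOp (d : ℕ) : Type
  | inc : Fin d → RCMOp d
  | dec : Fin d → RCMOp d
  | reset : Fin d → RCMOp d

/-- A reset counter machine `M = (d, Q, δ)`. -/
structure RCM where
  d : ℕ
  Q : Type
  finQ : Finite Q
  δ : Q → RCMOp d → Q → Prop

/-- The step relation on configurations `(q, n̄) ∈ Q × ℕ^d` of an RCM. -/
inductive RCM.StepR (M : RCM) : (M.Q × (Fin M.d → ℕ)) → (M.Q × (Fin M.d → ℕ)) → Prop
  | inc {p q : M.Q} {i : Fin M.d} {n : Fin M.d → ℕ} :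
      M.δ p (.inc i) q → M.StepR (p, n) (q, Function.update n i (n i + 1))
  | dec {p q : M.Q} {i : Fin M.d} {n : Fin M.d → ℕ} :
      M.δ p (.dec i) q → 0 < n i → M.StepR (p, n) (q, Function.update n i (n i - 1))
  | reset {p q : M.Q} {i : Fin M.d} {n : Fin M.d → ℕ} :
      M.δ p (.reset i) q → M.StepR (p, n) (q, Function.update n i 0)

/-- `pfin` is reachable from configuration `c`: `c →* (pfin, m̄)` for some `m̄`. -/
def RCM.ReachesFinal (M : RCM) (pfin : M.Q) (c : M.Q × (Fin M.d → ℕ)) : Prop :=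
  ∃ m : Fin M.d → ℕ, Relation.ReflTransGen M.StepR c (pfin, m)

/-- Nonterminals of the grammar `G(M)`: unary `I`, nullary `bot`, and
`A_p, B_p, A_(p,i), B_(p,i,1), B_(p,i,2)` of arity `2d` for `p ∈ Q`, `1 ≤ i ≤ d`. -/
inductive GNT (Q : Type) (d : ℕ) : Type
  | I : GNT Q d
  | bot : GNT Q d
  | A : Q → GNT Q d
  | B : Q → GNT Q d
  | Ai : Q → Fin d → GNT Q d
  | B1 : Q → Fin d → GNT Q d
  | B2 : Q → Fin d → GNT Q d

def GNT.arity {Q : Type} {d : ℕ} : GNT Q d → ℕ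
  | .I => 1
  | .bot => 0
  | _ => 2 * d

/-- Actions of `G(M)`: the instructions of `M`, plus auxiliary actions `a` and `b`. -/
inductive GAct (Q : Type) (d : ℕ) : Type
  | instr : Q → RCMOp d → Q → GAct Q d
  | a : GAct Q d
  | b : GAct Q d

/-- The tuple of variables `x̄ = (x₁,…,x_{2d})`. -/
def xbar (Q : Type) (d : ℕ) : List (FOTerm (GNT Q d)) :=
  (List.range (2 * d)).map FOTerm.var

/-- The rules of the grammar `G(M)` (for final state `pfin`). -/
inductive GRule (M : RCM) (pfin : M.Q) :
    GNT M.Q M.d → GAct M.Q M.d → FOTerm (GNT M.Q M.d) → Prop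
  | irule : GRule M pfin .I .a (.var 0)
  | finrule : GRule M pfin (.A pfin) .a (.app .bot [])
  | incA {p q : M.Q} {i : Fin M.d} : M.δ p (.inc i) q →
      GRule M pfin (.A p) (.instr p (.inc i) q)
        (.app (.A q) ((xbar M.Q M.d).set (2 * (i : ℕ)) (.app .I [.var (2 * (i : ℕ))])))
  | incB {p q : M.Q} {i : Fin M.d} : M.δ p (.inc i) q →
      GRule M pfin (.B p) (.instr p (.inc i) q)
        (.app (.B q) ((xbar M.Q M.d).set (2 * (i : ℕ)) (.app .I [.var (2 * (i : ℕ))])))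
  | resetA {p q : M.Q} {i : Fin M.d} : M.δ p (.reset i) q →
      GRule M pfin (.A p) (.instr p (.reset i) q)
        (.app (.A q) (((xbar M.Q M.d).set (2 * (i : ℕ)) (.app .bot [])).set
          (2 * (i : ℕ) + 1) (.app .bot [])))
  | resetB {p q : M.Q} {i : Fin M.d} : M.δ p (.reset i) q →
      GRule M pfin (.B p) (.instr p (.reset i) q)
        (.app (.B q) (((xbar M.Q M.d).set (2 * (i : ℕ)) (.app .bot [])).set
          (2 * (i : ℕ) + 1) (.app .bot [])))
  | decA {p q : M.Q} {i : Fin M.d} : M.δ p (.dec i) q →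
      GRule M pfin (.A p) (.instr p (.dec i) q) (.app (.Ai q i) (xbar M.Q M.d))
  | decAB1 {p q : M.Q} {i : Fin M.d} : M.δ p (.dec i) q →
      GRule M pfin (.A p) (.instr p (.dec i) q) (.app (.B1 q i) (xbar M.Q M.d))
  | decAB2 {p q : M.Q} {i : Fin M.d} : M.δ p (.dec i) q →
      GRule M pfin (.A p) (.instr p (.dec i) q) (.app (.B2 q i) (xbar M.Q M.d))
  | decBB1 {p q : M.Q} {i : Fin M.d} : M.δ p (.dec i) q →
      GRule M pfin (.B p) (.instr p (.dec i) q) (.app (.B1 q i) (xbar M.Q M.d))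
  | decBB2 {p q : M.Q} {i : Fin M.d} : M.δ p (.dec i) q →
      GRule M pfin (.B p) (.instr p (.dec i) q) (.app (.B2 q i) (xbar M.Q M.d))
  | auxAa {p q : M.Q} {i : Fin M.d} : M.δ p (.dec i) q →
      GRule M pfin (.Ai q i) .a
        (.app (.A q) ((xbar M.Q M.d).set (2 * (i : ℕ) + 1) (.app .I [.var (2 * (i : ℕ) + 1)])))
  | auxB1a {p q : M.Q} {i : Fin M.d} : M.δ p (.dec i) q →
      GRule M pfin (.B1 q i) .a
        (.app (.B q) ((xbar M.Q M.d).set (2 * (i : ℕ) + 1) (.app .I [.var (2 * (i : ℕ) + 1)])))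
  | auxB2a {p q : M.Q} {i : Fin M.d} : M.δ p (.dec i) q →
      GRule M pfin (.B2 q i) .a
        (.app (.A q) ((xbar M.Q M.d).set (2 * (i : ℕ) + 1) (.app .I [.var (2 * (i : ℕ) + 1)])))
  | auxAb {p q : M.Q} {i : Fin M.d} : M.δ p (.dec i) q →
      GRule M pfin (.Ai q i) .b (.var (2 * (i : ℕ)))
  | auxB1b {p q : M.Q} {i : Fin M.d} : M.δ p (.dec i) q →
      GRule M pfin (.B1 q i) .b (.var (2 * (i : ℕ)))
  | auxB2b {p q : M.Q} {i : Fin M.d} : M.δ p (.dec i) q →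
      GRule M pfin (.B2 q i) .b (.var (2 * (i : ℕ) + 1))

/-- The grammar `G(M)` associated with an RCM `M` and final state `pfin`. -/
@[reducible] def GrammarOf (M : RCM) (pfin : M.Q) : Grammar where
  N := GNT M.Q M.d
  arity := GNT.arity
  Act := GAct M.Q M.d
  Rule := GRule M pfin

/-- `iterTerm I bot n` is the term `Iⁿ⊥`. -/
def iterTerm {N : Type} (I bot : N) : ℕ → FOTerm N
  | 0 => .app bot []
  | n + 1 => .app I [iterTerm I bot n]

/-- `Iⁿ⊥` in the grammar `G(M)`. -/
@[reducible] def ipow {Q : Type} {d : ℕ} (n : ℕ) : FOTerm (GNT Q d) :=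
  iterTerm GNT.I GNT.bot n

/-- The `2d`-tuple of arguments `(I^{n₁}⊥, I^{n'₁}⊥, …, I^{n_d}⊥, I^{n'_d}⊥)`. -/
def vterms {Q : Type} {d : ℕ} (n n' : Fin d → ℕ) : List (FOTerm (GNT Q d)) :=
  (List.finRange d).flatMap fun i => [ipow (n i), ipow (n' i)]

/-! ### Tuples of arguments -/

/-- The `k`-th argument of the tuple encoding `(n, n')`, counting from `0`, as a substitution. Beyond
the last argument its value is irrelevant and chosen to be `⊥`. -/
def argSubst {Q : Type} {d : ℕ} (n n' : Fin d → ℕ) (k : ℕ) : FOTerm (GNT Q d) :=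
  if hk : k / 2 < d then
    if k % 2 = 0 then ipow (n ⟨k / 2, hk⟩) else ipow (n' ⟨k / 2, hk⟩)
  else .app .bot []

lemma range_two_mul_eq_flatMap (d : ℕ) :
    List.range (2 * d) = (List.finRange d).flatMap fun i : Fin d =>
      [2 * (i : ℕ), 2 * (i : ℕ) + 1] := by
  induction d with
  | zero => rfl
  | succ d ih =>
    rw [List.finRange_succ_last, List.flatMap_append, List.flatMap_map]
    simp only [Fin.val_castSucc, List.flatMap_singleton, Fin.val_last]
    rw [← ih, show 2 * (d + 1) = 2 * d + 1 + 1 by ring, List.range_succ, List.range_succ]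
    simp

lemma argSubst_even {Q : Type} {d : ℕ} (n n' : Fin d → ℕ) (i : Fin d) :
    argSubst (Q := Q) n n' (2 * (i : ℕ)) = ipow (n i) := by
  simp [argSubst]

lemma argSubst_odd {Q : Type} {d : ℕ} (n n' : Fin d → ℕ) (i : Fin d) :
    argSubst (Q := Q) n n' (2 * (i : ℕ) + 1) = ipow (n' i) := by
  have h1 : (2 * (i : ℕ) + 1) / 2 = i := by omega
  have h2 : (2 * (i : ℕ) + 1) % 2 = 1 := by omega
  simp [argSubst, h1, h2]

lemma vterms_eq {Q : Type} {d : ℕ} (n n' : Fin d → ℕ) :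
    vterms (Q := Q) n n' = (List.range (2 * d)).map (argSubst n n') := by
  rw [range_two_mul_eq_flatMap, List.map_flatMap]
  simp [vterms, argSubst_even, argSubst_odd]

lemma vterms_set_even {Q : Type} {d : ℕ} (n n' : Fin d → ℕ) (i : Fin d) (m : ℕ) :
    (vterms (Q := Q) n n').set (2 * (i : ℕ)) (ipow m) = vterms (Function.update n i m) n' := by
  rw [vterms_eq, vterms_eq]
  apply List.ext_getElem
  · simp
  intro k h1 h2
  simp only [List.length_map, List.length_range] at h2
  have hk : k / 2 < d := by omega
  simp only [List.getElem_set, List.getElem_map, List.getElem_range, argSubst, hk, dite_true,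
    Function.update_apply, Fin.ext_iff]
  split_ifs <;> first | rfl | omega

lemma vterms_set_odd {Q : Type} {d : ℕ} (n n' : Fin d → ℕ) (i : Fin d) (m : ℕ) :
    (vterms (Q := Q) n n').set (2 * (i : ℕ) + 1) (ipow m) = vterms n (Function.update n' i m) := by
  rw [vterms_eq, vterms_eq]
  apply List.ext_getElem
  · simp
  intro k h1 h2
  simp only [List.length_map, List.length_range] at h2
  have hk : k / 2 < d := by omega
  simp only [List.getElem_set, List.getElem_map, List.getElem_range, argSubst, hk, dite_true,
    Function.update_apply, Fin.ext_iff]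
  split_ifs <;> first | rfl | omega

/-! ### Substitution in right-hand sides of rules -/

lemma subst_app {N : Type} (σ : ℕ → FOTerm N) (X : N) (ts : List (FOTerm N)) :
    (FOTerm.app X ts).subst σ = .app X (ts.map (FOTerm.subst σ)) := by
  rw [FOTerm.subst]
  simp

lemma subst_var {N : Type} (σ : ℕ → FOTerm N) (i : ℕ) : (FOTerm.var i).subst σ = σ i := by
  rw [FOTerm.subst]

lemma map_subst_xbar {Q : Type} {d : ℕ} (σ : ℕ → FOTerm (GNT Q d)) :
    (xbar Q d).map (FOTerm.subst σ) = (List.range (2 * d)).map σ := by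
  simp [xbar, subst_var]

/-- A substitution producing the tuple that encodes `(n, n')`. Only its values on the variables
`x₁,…,x_{2d}` are determined. -/
def Encodes {Q : Type} {d : ℕ} (σ : ℕ → FOTerm (GNT Q d)) (n n' : Fin d → ℕ) : Prop :=
  (List.range (2 * d)).map σ = vterms n n'

namespace Encodes

variable {Q : Type} {d : ℕ} {σ : ℕ → FOTerm (GNT Q d)} {n n' : Fin d → ℕ}

lemma apply_eq (h : Encodes σ n n') {k : ℕ} (hk : k < 2 * d) : σ k = argSubst n n' k := by
  rw [Encodes, vterms_eq, List.map_inj_left] at h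
  exact h k (List.mem_range.2 hk)

lemma even (h : Encodes σ n n') (i : Fin d) : σ (2 * (i : ℕ)) = ipow (n i) := by
  rw [h.apply_eq (by omega), argSubst_even]

lemma odd (h : Encodes σ n n') (i : Fin d) : σ (2 * (i : ℕ) + 1) = ipow (n' i) := by
  rw [h.apply_eq (by omega), argSubst_odd]

lemma subst_xbar (h : Encodes σ n n') (X : GNT Q d) :
    (FOTerm.app X (xbar Q d)).subst σ = .app X (vterms n n') := by
  rw [subst_app, map_subst_xbar, h]

lemma subst_inc (h : Encodes σ n n') (X : GNT Q d) (i : Fin d) :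
    (FOTerm.app X ((xbar Q d).set (2 * (i : ℕ)) (.app .I [.var (2 * (i : ℕ))]))).subst σ =
      .app X (vterms (Function.update n i (n i + 1)) n') := by
  rw [subst_app, List.map_set, map_subst_xbar, h, subst_app, List.map_singleton, subst_var,
    h.even, ← vterms_set_even]
  rfl

lemma subst_inc' (h : Encodes σ n n') (X : GNT Q d) (i : Fin d) :
    (FOTerm.app X
        ((xbar Q d).set (2 * (i : ℕ) + 1) (.app .I [.var (2 * (i : ℕ) + 1)]))).subst σ =
      .app X (vterms n (Function.update n' i (n' i + 1))) := by
  rw [subst_app, List.map_set, map_subst_xbar, h, subst_app, List.map_singleton, subst_var,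
    h.odd, ← vterms_set_odd]
  rfl

lemma subst_reset (h : Encodes σ n n') (X : GNT Q d) (i : Fin d) :
    (FOTerm.app X (((xbar Q d).set (2 * (i : ℕ)) (.app .bot [])).set
        (2 * (i : ℕ) + 1) (.app .bot []))).subst σ =
      .app X (vterms (Function.update n i 0) (Function.update n' i 0)) := by
  rw [subst_app, List.map_set, List.map_set, map_subst_xbar, h, subst_app, List.map_nil,
    ← vterms_set_odd, ← vterms_set_even]
  rfl

end Encodes

lemma encodes_argSubst {Q : Type} {d : ℕ} (n n' : Fin d → ℕ) :
    Encodes (Q := Q) (argSubst n n') n n' := by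
  rw [Encodes, vterms_eq]

/-- Inversion of a transition whose source has root `X`. -/
lemma Grammar.Step.exists_rule {G : Grammar} {X : G.N} {L : List (FOTerm G.N)} {a : G.Act}
    {T : FOTerm G.N} (h : G.Step (.app X L) a T) :
    ∃ V σ, G.Rule X a V ∧ (List.range (G.arity X)).map σ = L ∧ T = V.subst σ := by
  cases h with
  | step _ _ V σ hr => exact ⟨V, σ, hr, rfl, rfl⟩

/-! ### The bisimulation game -/

section Bisimulation

variable {M : RCM} {pfin : M.Q}
  {S : FOTerm (GNT M.Q M.d) → FOTerm (GNT M.Q M.d) → Prop}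

/-- One round of the bisimulation game between terms with the same `2d` encoded arguments: a rule
for the left root is answered by a rule with the same action for the right root. -/
lemma exists_answer (hS : (GrammarOf M pfin).IsBisimulation S) {X Y : GNT M.Q M.d}
    (hX : X.arity = 2 * M.d) (hY : Y.arity = 2 * M.d) {n n' : Fin M.d → ℕ}
    (h : S (.app X (vterms n n')) (.app Y (vterms n n')))
    {c : GAct M.Q M.d} {V : FOTerm (GNT M.Q M.d)} (hr : GRule M pfin X c V) :
    ∃ W σ, GRule M pfin Y c W ∧ Encodes σ n n' ∧ S (V.subst (argSubst n n')) (W.subst σ) := by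
  have hstep := Grammar.Step.step (G := GrammarOf M pfin) X c V (argSubst n n') hr
  change (GrammarOf M pfin).Step (.app X ((List.range X.arity).map _)) _ _ at hstep
  rw [hX, ← vterms_eq] at hstep
  obtain ⟨U, hU, hSU⟩ := hS.2 _ _ h _ _ hstep
  obtain ⟨W, σ, hW, hσ, rfl⟩ := hU.exists_rule
  change (List.range Y.arity).map σ = _ at hσ
  rw [hY] at hσ
  exact ⟨W, σ, hW, hσ, hSU⟩

lemma not_rel_ipow_succ_zero (hS : (GrammarOf M pfin).IsBisimulation S) (m : ℕ) :
    ¬ S (ipow (m + 1)) (ipow 0) := by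
  intro h
  obtain ⟨U, hU, -⟩ := hS.2 _ _ h _ _
    (Grammar.Step.step (G := GrammarOf M pfin) .I .a (.var 0) (fun _ => ipow m) .irule)
  obtain ⟨W, σ, hW, -⟩ := hU.exists_rule
  cases hW

/-- Bisimilar terms `I^m ⊥` and `I^k ⊥` have equal exponents, since `I^m ⊥` performs exactly `m`
transitions. -/
lemma ipow_inj_of_bisim (hS : (GrammarOf M pfin).IsBisimulation S) :
    ∀ m k : ℕ, S (ipow m) (ipow k) → m = k := by
  intro m
  induction m with
  | zero =>
    rintro (_ | k) h
    · rfl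
    · exact absurd (hS.1 _ _ h) (not_rel_ipow_succ_zero hS k)
  | succ m ih =>
    rintro (_ | k) h
    · exact absurd h (not_rel_ipow_succ_zero hS m)
    · obtain ⟨U, hU, hSU⟩ := hS.2 _ _ h _ _
        (Grammar.Step.step (G := GrammarOf M pfin) .I .a (.var 0) (fun _ => ipow m) .irule)
      obtain ⟨W, σ, hW, hσ, rfl⟩ := hU.exists_rule
      cases hW
      have h0 : σ 0 = ipow k := by simpa [GNT.arity] using hσ
      rw [subst_var, subst_var, h0] at hSU
      rw [ih k hSU]

/-- No bisimulation relates `A_q(v)` and `B_q(v)` when `v` encodes `(n, n')`, `n' ≤ n`, and the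
final state is reachable from `(q, n - n')`. -/
lemma not_rel_of_reachable (hS : (GrammarOf M pfin).IsBisimulation S) {m : Fin M.d → ℕ}
    {c : M.Q × (Fin M.d → ℕ)} (hc : Relation.ReflTransGen M.StepR c (pfin, m)) :
    ∀ n n' : Fin M.d → ℕ, (∀ i, n' i ≤ n i) → (c.2 = fun i => n i - n' i) →
      ¬ S (.app (.A c.1) (vterms n n')) (.app (.B c.1) (vterms n n')) := by
  induction hc using Relation.ReflTransGen.head_induction_on with
  | refl =>
    intro n n' _ _ h
    obtain ⟨W, σ, hW, -⟩ := exists_answer hS rfl rfl h .finrule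
    cases hW
  | head hstep _ ih =>
    intro n n' hle heq h
    cases hstep with
    | @inc p q i k hδ =>
      obtain ⟨W, σ, hW, hσ, hSW⟩ := exists_answer hS rfl rfl h (.incA hδ)
      cases hW
      rw [(encodes_argSubst n n').subst_inc, hσ.subst_inc] at hSW
      refine ih _ _ (fun j => ?_) ?_ hSW
      · have := hle j
        by_cases hj : j = i
        · subst hj; simp; omega
        · simpa [hj] using this
      · funext j
        have := hle j
        have hk := congrFun heq j
        simp only at hk
        by_cases hj : j = i
        · subst hj; simp; omega
        · simpa [hj] using hk
    | @reset p q i k hδ =>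
      obtain ⟨W, σ, hW, hσ, hSW⟩ := exists_answer hS rfl rfl h (.resetA hδ)
      cases hW
      rw [(encodes_argSubst n n').subst_reset, hσ.subst_reset] at hSW
      refine ih _ _ (fun j => ?_) ?_ hSW
      · by_cases hj : j = i
        · subst hj; simp
        · simpa [hj] using hle j
      · funext j
        have hk := congrFun heq j
        by_cases hj : j = i
        · subst hj; simp
        · simpa [hj] using hk
    | @dec p q i k hδ hpos =>
      have hlt : n' i < n i := by
        have hk := congrFun heq i
        simp only at hk
        omega
      obtain ⟨W, σ, hW, hσ, hSW⟩ := exists_answer hS rfl rfl h (.decA hδ)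
      cases hW with
      | decBB1 _ =>
        rw [(encodes_argSubst n n').subst_xbar, hσ.subst_xbar] at hSW
        obtain ⟨W, τ, hW, hτ, hSW⟩ := exists_answer hS rfl rfl hSW (.auxAa hδ)
        cases hW
        rw [(encodes_argSubst n n').subst_inc', hτ.subst_inc'] at hSW
        refine ih _ _ (fun j => ?_) ?_ hSW
        · by_cases hj : j = i
          · subst hj; simpa using hlt
          · simpa [hj] using hle j
        · funext j
          have hk := congrFun heq j
          simp only at hk
          by_cases hj : j = i
          · subst hj; simp; omega
          · simpa [hj] using hk
      | decBB2 _ =>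
        rw [(encodes_argSubst n n').subst_xbar, hσ.subst_xbar] at hSW
        obtain ⟨W, τ, hW, hτ, hSW⟩ := exists_answer hS rfl rfl hSW (.auxAb hδ)
        cases hW
        rw [subst_var, subst_var, (encodes_argSubst n n').even, hτ.odd] at hSW
        exact hlt.ne' (ipow_inj_of_bisim hS _ _ hSW)

end Bisimulation

/-- For every state `q` and tuples `n̄ ≥ n̄'` (componentwise):
if `(q, n̄ − n̄') →* (p_final, m̄)` in `M` for some `m̄`, then
`A_q(I^{n₁}⊥, I^{n'₁}⊥, …, I^{n_d}⊥, I^{n'_d}⊥)` and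
`B_q(I^{n₁}⊥, I^{n'₁}⊥, …, I^{n_d}⊥, I^{n'_d}⊥)` are NOT bisimilar in `L_{G(M)}`. -/
theorem not_bisim_of_reachable (M : RCM) (pinit pfin : M.Q) (q : M.Q)
    (n n' : Fin M.d → ℕ) (h : ∀ i, n' i ≤ n i)
    (hreach : ∃ m : Fin M.d → ℕ,
      Relation.ReflTransGen M.StepR (q, fun i => n i - n' i) (pfin, m)) :
    ¬ (GrammarOf M pfin).Bisim
        (.app (.A q) (vterms n n')) (.app (.B q) (vterms n n')) := by
  rintro ⟨S, hS, hrel⟩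
  obtain ⟨m, hm⟩ := hreach
  exact not_rel_of_reachable hS hm n n' h rfl hrel
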